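/- Let α be a factor of ω with |α| ≥ 2. Then the set {(i,j) ∈ {0,1}² : the word i α j is a factor of ω} has at least 3 elements if and only if there exists n ≥ 0 such that α is one of the four words 0^{(n)}1^{(n)}, 1^{(n)}0^{(n)}, 0^{(n)}1^{(n)}1^{(n)}0^{(n)}, 1^{(n)}0^{(n)}0^{(n)}1^{(n)}; and in that case the set has exactly 4 elements. -/

import Mathlib

/-- One-sided Thue–Morse sequence: parity of the binary digit sum. -/
def tm (n : ℕ) : ℕ := (Nat.digits 2 n).sum % 2

/-- Two-sided Thue–Morse sequence `ω : ℤ → {0,1}`. -/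
def tmZ (n : ℤ) : ℕ := if 0 ≤ n then tm n.toNat else tm (-n - 1).toNat

/-- The block `ω_[m, m+k-1]` of the two-sided Thue–Morse sequence. -/
def tmBlock (m : ℤ) (k : ℕ) : List ℕ := (List.range k).map fun j => tmZ (m + j)

/-- A (nonempty) word is a factor of the two-sided Thue–Morse sequence. -/
def IsFactor (α : List ℕ) : Prop := α ≠ [] ∧ ∃ m : ℤ, α = tmBlock m α.length

/-- The words `i⁽ⁿ⁾`: `blk i 0 = [i]`, `blk i (n+1) = blk i n ++ blk (1-i) n`. -/
def blk : ℕ → ℕ → List ℕ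
  | i, 0 => [i]
  | i, n + 1 => blk i n ++ blk (1 - i) n

/-!
Write `μ` for the Thue–Morse substitution `0 ↦ 01`, `1 ↦ 10`. Since
`0⁽ⁿ⁺¹⁾1⁽ⁿ⁺¹⁾ = 0⁽ⁿ⁾1⁽ⁿ⁾1⁽ⁿ⁾0⁽ⁿ⁾`, the four families of words consist of the images `μⁿ⁺¹(i)` of
the letters. Two equal adjacent letters of `ω` sit at positions `2s + 1`, `2s + 2`. Hence, if `α`
contains such a pair and has three extensions, then extending it on the left by its own first
letter, and on the right by its own last letter, shows that `α` is cut by the substitution at both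
ends: `α = μ(β)`, and `(i, j) ↦ (1 - i, j)` matches the extensions of `β` with those of `α`. This
descends to the alternating words, of which only `01` and `10` survive. The two-sided
sequence enters only through its factors, which are those of the one-sided sequence because the
neighbourhood of `0` reappears around `6 · 4ᴷ`.
-/

theorem tm_le_one (n : ℕ) : tm n ≤ 1 :=
  Nat.le_of_lt_succ (Nat.mod_lt _ two_pos)

theorem tm_two_mul (n : ℕ) : tm (2 * n) = tm n := by
  rcases n.eq_zero_or_pos with rfl | hn
  · rfl
  · simp [tm, Nat.digits_def' one_lt_two (Nat.mul_pos two_pos hn)]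

theorem tm_two_mul_add_one (n : ℕ) : tm (2 * n + 1) = 1 - tm n := by
  have hdigits := Nat.digits_add 2 one_lt_two 1 n one_lt_two (Or.inl one_ne_zero)
  simp only [tm, add_comm _ 1, hdigits, List.sum_cons]
  omega

theorem tm_mul_two_pow_add (a : ℕ) {K r : ℕ} (hr : r < 2 ^ K) :
    tm (a * 2 ^ K + r) = (tm a + tm r) % 2 := by
  induction K generalizing r with
  | zero =>
    obtain rfl : r = 0 := by simpa using hr
    simp [tm]
  | succ K ih =>
    rw [pow_succ] at hr ⊢
    obtain ⟨s, rfl | rfl⟩ := r.even_or_odd'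
    · rw [show a * (2 ^ K * 2) + 2 * s = 2 * (a * 2 ^ K + s) by ring, tm_two_mul, tm_two_mul,
        ih (by omega)]
    · rw [show a * (2 ^ K * 2) + (2 * s + 1) = 2 * (a * 2 ^ K + s) + 1 by ring,
        tm_two_mul_add_one, tm_two_mul_add_one, ih (by omega)]
      have := tm_le_one s
      omega

theorem tm_two_pow_sub_one_sub {K r : ℕ} (hr : r < 2 ^ K) :
    tm (2 ^ K - 1 - r) = (tm r + K) % 2 := by
  induction K generalizing r with
  | zero =>
    obtain rfl : r = 0 := by simpa using hr
    simp [tm]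
  | succ K ih =>
    rw [pow_succ] at hr ⊢
    obtain ⟨s, rfl | rfl⟩ := r.even_or_odd'
    · rw [show 2 ^ K * 2 - 1 - 2 * s = 2 * (2 ^ K - 1 - s) + 1 by omega, tm_two_mul_add_one,
        tm_two_mul, ih (by omega)]
      omega
    · rw [show 2 ^ K * 2 - 1 - (2 * s + 1) = 2 * (2 ^ K - 1 - s) by omega, tm_two_mul,
        tm_two_mul_add_one, ih (by omega)]
      have := tm_le_one s
      omega

-- The factor `6` works because `tm 5 = tm 6 = 0`.
theorem tm_six_mul_four_pow_add {K : ℕ} {n : ℤ} (hn : n.natAbs < 4 ^ K) :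
    tm (6 * 4 ^ K + n).toNat = tmZ n := by
  have hpow : 4 ^ K = 2 ^ (2 * K) := by rw [pow_mul]; norm_num
  have hcast : (4 : ℤ) ^ K = ((2 ^ (2 * K) : ℕ) : ℤ) := by rw [← hpow]; norm_cast
  rw [hpow] at hn
  rw [hcast, tmZ]
  split_ifs with h
  · rw [show (6 * ((2 ^ (2 * K) : ℕ) : ℤ) + n).toNat = 6 * 2 ^ (2 * K) + n.toNat by omega,
      tm_mul_two_pow_add 6 (by omega)]
    simp [tm]
  · rw [show (6 * ((2 ^ (2 * K) : ℕ) : ℤ) + n).toNat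
        = 5 * 2 ^ (2 * K) + (2 ^ (2 * K) - 1 - (-n - 1).toNat) by omega,
      tm_mul_two_pow_add 5 (by omega), tm_two_pow_sub_one_sub (by omega)]
    simp [tm]

theorem exists_forall_tm_add_eq_tmZ_add (m : ℤ) (k : ℕ) :
    ∃ p : ℕ, ∀ t < k, tm (p + t) = tmZ (m + t) := by
  set K := m.natAbs + k
  have hK : K < 4 ^ K := Nat.lt_pow_self (by norm_num)
  refine ⟨(6 * 4 ^ K + m).toNat, fun t ht => ?_⟩
  have hcast : (4 : ℤ) ^ K = ((4 ^ K : ℕ) : ℤ) := by norm_cast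
  rw [← tm_six_mul_four_pow_add (show (m + t).natAbs < 4 ^ K by omega)]
  congr 1
  omega

theorem odd_of_tm_eq_tm_succ {n : ℕ} (h : tm n = tm (n + 1)) : Odd n := by
  by_contra hn
  obtain ⟨s, rfl⟩ := even_iff_exists_two_mul.1 (Nat.not_odd_iff_even.1 hn)
  rw [tm_two_mul, tm_two_mul_add_one] at h
  omega

theorem tm_eq_tm_succ_of_tm_two_mul_add_one_ne {s : ℕ} (h : tm (2 * s + 1) ≠ tm (2 * s + 2)) :
    tm s = tm (s + 1) := by
  rw [tm_two_mul_add_one, ← mul_add_one, tm_two_mul] at h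
  have := tm_le_one s
  have := tm_le_one (s + 1)
  omega

theorem not_tm_eq_tm_succ_and_succ (s : ℕ) : ¬(tm s = tm (s + 1) ∧ tm (s + 1) = tm (s + 2)) := by
  rintro ⟨h₁, h₂⟩
  have := Nat.odd_iff.1 (odd_of_tm_eq_tm_succ h₁)
  have := Nat.odd_iff.1 (odd_of_tm_eq_tm_succ h₂)
  omega

/-- The word `w` occurs in the one-sided Thue–Morse sequence, starting at position `p`. -/
def OccursAt (w : List ℕ) (p : ℕ) : Prop := (List.range' p w.length).map tm = w

theorem occursAt_nil (p : ℕ) : OccursAt [] p := rfl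

theorem occursAt_cons {a : ℕ} {w : List ℕ} {p : ℕ} :
    OccursAt (a :: w) p ↔ tm p = a ∧ OccursAt w (p + 1) := by
  simp [OccursAt, List.range'_succ]

theorem occursAt_append {u v : List ℕ} {p : ℕ} :
    OccursAt (u ++ v) p ↔ OccursAt u p ∧ OccursAt v (p + u.length) := by
  induction u generalizing p with
  | nil => simp [occursAt_nil]
  | cons a u ih =>
    simp [occursAt_cons, ih, and_assoc, show p + 1 + u.length = p + (u.length + 1) by ring]

theorem occursAt_map_range' (p k : ℕ) : OccursAt ((List.range' p k).map tm) p := by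
  simp [OccursAt]

theorem OccursAt.eq_of_length_eq {u v : List ℕ} {p : ℕ} (hu : OccursAt u p) (hv : OccursAt v p)
    (h : u.length = v.length) : u = v :=
  calc u = (List.range' p u.length).map tm := hu.symm
    _ = (List.range' p v.length).map tm := by rw [h]
    _ = v := hv

theorem OccursAt.odd_add_length {u v : List ℕ} {a p : ℕ} (h : OccursAt (u ++ a :: a :: v) p) :
    Odd (p + u.length) := by
  obtain ⟨h₀, h₁, -⟩ := by simpa only [occursAt_cons] using (occursAt_append.1 h).2
  exact odd_of_tm_eq_tm_succ (h₀.trans h₁.symm)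

-- Of the four boundaries between five consecutive letters, two are of the form `2s + 1 | 2s + 2`.
theorem OccursAt.length_le_four_of_isChain_ne {w : List ℕ} {p : ℕ} (h : OccursAt w p)
    (hw : w.IsChain (· ≠ ·)) : w.length ≤ 4 := by
  by_contra! hlen
  match w, hlen with
  | a :: b :: c :: d :: e :: w, _ =>
    obtain ⟨rfl, rfl, rfl, rfl, rfl, -⟩ := by simpa only [occursAt_cons, add_assoc] using h
    simp only [List.isChain_cons_cons] at hw
    obtain ⟨h₀, h₁, h₂, h₃, -⟩ := hw
    obtain ⟨s, rfl | rfl⟩ := p.even_or_odd'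
    · exact not_tm_eq_tm_succ_and_succ s ⟨tm_eq_tm_succ_of_tm_two_mul_add_one_ne h₁,
        tm_eq_tm_succ_of_tm_two_mul_add_one_ne h₃⟩
    · exact not_tm_eq_tm_succ_and_succ s ⟨tm_eq_tm_succ_of_tm_two_mul_add_one_ne h₀,
        tm_eq_tm_succ_of_tm_two_mul_add_one_ne h₂⟩

theorem tmBlock_eq_map_range (m : ℤ) (k : ℕ) :
    tmBlock m k = (List.range k).map fun t : ℕ => tmZ (m + t) := by
  simp [tmBlock, ← List.map_eq_flatMap]

theorem isFactor_iff_exists_occursAt {w : List ℕ} :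
    IsFactor w ↔ w ≠ [] ∧ ∃ p, OccursAt w p := by
  refine and_congr_right fun _ => ⟨?_, ?_⟩
  · rintro ⟨m, hm⟩
    obtain ⟨p, hp⟩ := exists_forall_tm_add_eq_tmZ_add m w.length
    refine ⟨p, Eq.trans ?_ hm.symm⟩
    simpa [tmBlock_eq_map_range, List.range'_eq_map_range] using hp
  · rintro ⟨p, hp⟩
    refine ⟨p, hp.symm.trans ?_⟩
    have htmZ : ∀ n : ℕ, tmZ n = tm n := fun n => by simp [tmZ]
    simp [tmBlock_eq_map_range, List.range'_eq_map_range, ← htmZ]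

/-- The Thue–Morse substitution `μ`, mapping `0` to `01` and `1` to `10`. -/
def tmSubst (w : List ℕ) : List ℕ := w.flatMap fun a => [a, 1 - a]

theorem tmSubst_cons (a : ℕ) (w : List ℕ) : tmSubst (a :: w) = a :: (1 - a) :: tmSubst w := rfl

theorem tmSubst_append (u v : List ℕ) : tmSubst (u ++ v) = tmSubst u ++ tmSubst v :=
  List.flatMap_append

theorem length_tmSubst (w : List ℕ) : (tmSubst w).length = 2 * w.length := by
  simp [tmSubst, mul_comm]

theorem tmSubst_blk {i : ℕ} (hi : i ≤ 1) (n : ℕ) : tmSubst (blk i n) = blk i (n + 1) := by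
  induction n generalizing i with
  | zero => rfl
  | succ n ih => rw [blk, tmSubst_append, ih hi, ih (Nat.sub_le 1 i), ← blk]

theorem occursAt_tmSubst {w : List ℕ} {p : ℕ} : OccursAt (tmSubst w) (2 * p) ↔ OccursAt w p := by
  induction w generalizing p with
  | nil => exact Iff.rfl
  | cons a w ih =>
    rw [tmSubst_cons, occursAt_cons, occursAt_cons, occursAt_cons, tm_two_mul, tm_two_mul_add_one,
      show 2 * p + 1 + 1 = 2 * (p + 1) by ring, ih]
    grind

theorem OccursAt.exists_eq_tmSubst {w : List ℕ} {q l : ℕ} (h : OccursAt w (2 * q))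
    (hl : w.length = 2 * l) : ∃ v, w = tmSubst v :=
  ⟨_, h.eq_of_length_eq (occursAt_tmSubst.2 (occursAt_map_range' q l))
    (by simp [length_tmSubst, hl])⟩

/-- The pairs of letters `(i, j)` for which `i α j` is a factor of `ω`. -/
def tmExtensions (α : List ℕ) : Set (ℕ × ℕ) :=
  {p | (p.1 = 0 ∨ p.1 = 1) ∧ (p.2 = 0 ∨ p.2 = 1) ∧ IsFactor (p.1 :: (α ++ [p.2]))}

theorem mem_tmExtensions {α : List ℕ} {i j : ℕ} :
    (i, j) ∈ tmExtensions α ↔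
      ∃ p, tm p = i ∧ OccursAt α (p + 1) ∧ tm (p + 1 + α.length) = j := by
  have hfactor : IsFactor (i :: (α ++ [j])) ↔
      ∃ p, tm p = i ∧ OccursAt α (p + 1) ∧ tm (p + 1 + α.length) = j := by
    simp [isFactor_iff_exists_occursAt, occursAt_cons, occursAt_append, occursAt_nil]
  refine ⟨fun h => hfactor.1 h.2.2, fun h => ⟨?_, ?_, hfactor.2 h⟩⟩ <;>
    obtain ⟨p, rfl, -, rfl⟩ := h <;>
    exact Nat.le_one_iff_eq_zero_or_eq_one.1 (tm_le_one _)

theorem tmExtensions_subset (α : List ℕ) :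
    tmExtensions α ⊆ (Finset.range 2 ×ˢ Finset.range 2 : Finset (ℕ × ℕ)) := by
  rintro ⟨i, j⟩ ⟨hi, hj, -⟩
  simp only [Finset.coe_product, Set.mem_prod, Finset.mem_coe, Finset.mem_range]
  omega

theorem finite_tmExtensions (α : List ℕ) : (tmExtensions α).Finite :=
  (Finset.finite_toSet _).subset (tmExtensions_subset α)

theorem ncard_tmExtensions_le_four (α : List ℕ) : (tmExtensions α).ncard ≤ 4 := by
  simpa using Set.ncard_le_ncard (tmExtensions_subset α)

theorem one_sub_injOn_tmExtensions (α : List ℕ) :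
    Set.InjOn (fun p : ℕ × ℕ => (1 - p.1, p.2)) (tmExtensions α) := by
  rintro ⟨i, j⟩ ⟨hi, -⟩ ⟨i', j'⟩ ⟨hi', -⟩ h
  simp only [Prod.mk.injEq] at hi hi' h ⊢
  omega

theorem ncard_tmExtensions_le_tmSubst (β : List ℕ) :
    (tmExtensions β).ncard ≤ (tmExtensions (tmSubst β)).ncard := by
  refine Set.ncard_le_ncard_of_injOn _ ?_ (one_sub_injOn_tmExtensions β) (finite_tmExtensions _)
  rintro ⟨i, j⟩ h
  obtain ⟨p, rfl, hβ, rfl⟩ := mem_tmExtensions.1 h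
  refine mem_tmExtensions.2 ⟨2 * p + 1, tm_two_mul_add_one p, occursAt_tmSubst.2 hβ, ?_⟩
  rw [length_tmSubst, ← tm_two_mul (p + 1 + β.length)]
  ring_nf

theorem ncard_tmExtensions_tmSubst_le {β : List ℕ} (h : ∀ p, OccursAt (tmSubst β) p → Even p) :
    (tmExtensions (tmSubst β)).ncard ≤ (tmExtensions β).ncard := by
  refine Set.ncard_le_ncard_of_injOn _ ?_ (one_sub_injOn_tmExtensions _) (finite_tmExtensions _)
  rintro ⟨i, j⟩ hij
  obtain ⟨p, rfl, hβ, rfl⟩ := mem_tmExtensions.1 hij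
  obtain ⟨s, rfl⟩ : Odd p := by simpa [Nat.even_add_one] using h _ hβ
  refine mem_tmExtensions.2 ⟨s, ?_, occursAt_tmSubst.1 hβ, ?_⟩
  · have := tm_le_one s
    dsimp only
    rw [tm_two_mul_add_one]
    omega
  · dsimp only
    rw [length_tmSubst, ← tm_two_mul (s + 1 + β.length)]
    ring_nf

theorem mem_tmExtensions_or_mem {α : List ℕ} (h3 : 3 ≤ (tmExtensions α).ncard) {i j i' j' : ℕ}
    (hi : i ≤ 1) (hj : j ≤ 1) (hi' : i' ≤ 1) (hj' : j' ≤ 1) (hne : (i, j) ≠ (i', j')) :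
    (i, j) ∈ tmExtensions α ∨ (i', j') ∈ tmExtensions α := by
  by_contra! hnot
  set R : Finset (ℕ × ℕ) := ((Finset.range 2 ×ˢ Finset.range 2).erase (i, j)).erase (i', j')
  have hsub : tmExtensions α ⊆ R := fun x hx => by
    have hsq := tmExtensions_subset α hx
    have hx₁ : x ≠ (i, j) := fun h => hnot.1 (h ▸ hx)
    have hx₂ : x ≠ (i', j') := fun h => hnot.2 (h ▸ hx)
    exact Finset.mem_erase.2 ⟨hx₂, Finset.mem_erase.2 ⟨hx₁, hsq⟩⟩
  have hR : R.card = 2 := by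
    rw [Finset.card_erase_of_mem, Finset.card_erase_of_mem] <;> simp [hne.symm, *]
  have hle := Set.ncard_le_ncard hsub
  rw [Set.ncard_coe_finset] at hle
  omega

theorem exists_right_mem_tmExtensions {α : List ℕ} (h3 : 3 ≤ (tmExtensions α).ncard) {i : ℕ}
    (hi : i ≤ 1) : ∃ j, (i, j) ∈ tmExtensions α :=
  (mem_tmExtensions_or_mem h3 hi zero_le_one hi le_rfl (by simp)).elim (⟨_, ·⟩) (⟨_, ·⟩)

theorem exists_left_mem_tmExtensions {α : List ℕ} (h3 : 3 ≤ (tmExtensions α).ncard) {j : ℕ}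
    (hj : j ≤ 1) : ∃ i, (i, j) ∈ tmExtensions α :=
  (mem_tmExtensions_or_mem h3 zero_le_one hj le_rfl hj (by simp)).elim (⟨_, ·⟩) (⟨_, ·⟩)

theorem exists_diag_mem_tmExtensions {α : List ℕ} (h3 : 3 ≤ (tmExtensions α).ncard) :
    ∃ i, (i, i) ∈ tmExtensions α :=
  (mem_tmExtensions_or_mem h3 zero_le_one zero_le_one le_rfl le_rfl (by simp)).elim
    (⟨_, ·⟩) (⟨_, ·⟩)

theorem nonempty_tmExtensions {α : List ℕ} (h3 : 3 ≤ (tmExtensions α).ncard) :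
    (tmExtensions α).Nonempty :=
  Set.nonempty_of_ncard_ne_zero (Nat.ne_zero_of_lt h3)

theorem letter_le_one_of_nonempty_tmExtensions {α : List ℕ} (h : (tmExtensions α).Nonempty)
    {a : ℕ} (ha : a ∈ α) : a ≤ 1 := by
  obtain ⟨x, hx⟩ := h
  obtain ⟨p, -, hα, -⟩ := mem_tmExtensions.1 hx
  rw [← hα] at ha
  obtain ⟨n, -, rfl⟩ := List.mem_map.1 ha
  exact tm_le_one n

theorem length_le_three_of_isChain_ne {α : List ℕ} (h3 : 3 ≤ (tmExtensions α).ncard)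
    (hα : α.IsChain (· ≠ ·)) : α.length ≤ 3 := by
  rcases α with - | ⟨a, α⟩
  · exact Nat.zero_le _
  obtain ⟨j, hj⟩ := exists_right_mem_tmExtensions h3 (Nat.sub_le 1 a)
  obtain ⟨p, hp, hocc, -⟩ := mem_tmExtensions.1 hj
  have hchain : ((1 - a) :: a :: α).IsChain (· ≠ ·) := List.isChain_cons_cons.2 ⟨by omega, hα⟩
  exact Nat.le_of_succ_le_succ
    ((occursAt_cons.2 ⟨hp, hocc⟩).length_le_four_of_isChain_ne hchain)

-- Extending `aba` by the same letter on both sides gives `aabaa` or `babab`.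
theorem ncard_tmExtensions_triple_lt_three {a b : ℕ} (hab : a ≠ b) :
    (tmExtensions [a, b, a]).ncard < 3 := by
  by_contra! h3
  obtain ⟨i, hi⟩ := exists_diag_mem_tmExtensions h3
  obtain ⟨p, hp, hocc, hp'⟩ := mem_tmExtensions.1 hi
  by_cases hia : i = a
  · subst hia
    obtain ⟨h₁, -, h₃, -⟩ := by simpa only [occursAt_cons] using hocc
    have hodd := Nat.odd_iff.1 (odd_of_tm_eq_tm_succ (hp.trans h₁.symm))
    have hodd' := Nat.odd_iff.1 (odd_of_tm_eq_tm_succ (h₃.trans hp'.symm))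
    omega
  · have hocc' : OccursAt [i, a, b, a, i] p :=
      occursAt_cons.2 ⟨hp, (occursAt_append (v := [i])).2
        ⟨hocc, occursAt_cons.2 ⟨hp', occursAt_nil _⟩⟩⟩
    have := hocc'.length_le_four_of_isChain_ne (by simp [hia, Ne.symm hia, hab, hab.symm])
    simp at this

theorem eq_pair_of_isChain_ne {α : List ℕ} (h3 : 3 ≤ (tmExtensions α).ncard)
    (hlen : 2 ≤ α.length) (hα : α.IsChain (· ≠ ·)) : ∃ i ≤ 1, α = [i, 1 - i] := by
  have hbin : ∀ a ∈ α, a ≤ 1 := fun a =>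
    letter_le_one_of_nonempty_tmExtensions (nonempty_tmExtensions h3)
  match α, hlen, length_le_three_of_isChain_ne h3 hα with
  | [a, b], _, _ =>
    simp only [List.isChain_cons_cons, List.mem_cons, forall_eq_or_imp] at hα hbin
    obtain rfl : b = 1 - a := by omega
    exact ⟨a, hbin.1, rfl⟩
  | [a, b, c], _, _ =>
    simp only [List.isChain_cons_cons, List.mem_cons, forall_eq_or_imp] at hα hbin
    obtain rfl : c = a := by omega
    exact absurd h3 (ncard_tmExtensions_triple_lt_three hα.1).not_ge

theorem odd_length_of_three_le_ncard {u v : List ℕ} {a : ℕ}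
    (h3 : 3 ≤ (tmExtensions (u ++ a :: a :: v)).ncard) : Odd u.length := by
  obtain ⟨c, w, hw⟩ := List.exists_cons_of_ne_nil (show u ++ a :: a :: v ≠ [] by simp)
  have hc : c ≤ 1 :=
    letter_le_one_of_nonempty_tmExtensions (nonempty_tmExtensions h3) (by simp [hw])
  obtain ⟨j, hj⟩ := exists_right_mem_tmExtensions h3 hc
  obtain ⟨p, hp, hocc, -⟩ := mem_tmExtensions.1 hj
  have hfirst : tm (p + 1) = c := (occursAt_cons.1 (hw ▸ hocc)).1
  have hodd := Nat.odd_iff.1 (odd_of_tm_eq_tm_succ (hp.trans hfirst.symm))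
  have hodd' := Nat.odd_iff.1 hocc.odd_add_length
  exact Nat.odd_iff.2 (by omega)

theorem even_length_of_three_le_ncard {u v : List ℕ} {a : ℕ}
    (h3 : 3 ≤ (tmExtensions (u ++ a :: a :: v)).ncard) : Even (u ++ a :: a :: v).length := by
  obtain ⟨w, d, hw⟩ := (List.eq_nil_or_concat (u ++ a :: a :: v)).resolve_left (by simp)
  have hd : d ≤ 1 :=
    letter_le_one_of_nonempty_tmExtensions (nonempty_tmExtensions h3) (by simp [hw])
  obtain ⟨i, hi⟩ := exists_left_mem_tmExtensions h3 hd
  obtain ⟨p, -, hocc, hp⟩ := mem_tmExtensions.1 hi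
  have hlast : tm (p + 1 + w.length) = d :=
    (occursAt_cons.1 (occursAt_append.1 (by simpa [hw] using hocc)).2).1
  have hlength : (u ++ a :: a :: v).length = w.length + 1 := by simp [hw]
  rw [hlength] at hp ⊢
  have hodd := Nat.odd_iff.1 (odd_of_tm_eq_tm_succ (hlast.trans hp.symm))
  have hodd' := Nat.odd_iff.1 hocc.odd_add_length
  have hu := Nat.odd_iff.1 (odd_length_of_three_le_ncard h3)
  exact Nat.even_iff.2 (by omega)

theorem exists_eq_tmSubst_of_three_le_ncard {α : List ℕ} (h3 : 3 ≤ (tmExtensions α).ncard)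
    (hα : ¬α.IsChain (· ≠ ·)) : ∃ β, α = tmSubst β ∧ ∀ p, OccursAt α p → Even p := by
  simp only [List.isChain_iff_forall_rel_of_append_cons_cons, not_forall, not_not] at hα
  obtain ⟨a, _, u, v, rfl, rfl⟩ := hα
  have heven : ∀ p, OccursAt (u ++ a :: a :: v) p → Even p := fun p hp =>
    (Nat.odd_add'.1 hp.odd_add_length).1 (odd_length_of_three_le_ncard h3)
  obtain ⟨x, hx⟩ := nonempty_tmExtensions h3
  obtain ⟨p, -, hocc, -⟩ := mem_tmExtensions.1 hx
  obtain ⟨q, hq⟩ := even_iff_exists_two_mul.1 (heven _ hocc)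
  obtain ⟨l, hl⟩ := even_iff_exists_two_mul.1 (even_length_of_three_le_ncard h3)
  obtain ⟨β, hβ⟩ := (hq ▸ hocc).exists_eq_tmSubst hl
  exact ⟨β, hβ, heven⟩

theorem exists_eq_blk_of_three_le_ncard {α : List ℕ} (hlen : 2 ≤ α.length)
    (h3 : 3 ≤ (tmExtensions α).ncard) : ∃ n, ∃ i ≤ 1, α = blk i (n + 1) := by
  induction hk : α.length using Nat.strong_induction_on generalizing α with
  | _ k ih =>
    by_cases hα : α.IsChain (· ≠ ·)
    · obtain ⟨i, hi, rfl⟩ := eq_pair_of_isChain_ne h3 hlen hα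
      exact ⟨0, i, hi, rfl⟩
    · obtain ⟨β, rfl, heven⟩ := exists_eq_tmSubst_of_three_le_ncard h3 hα
      rw [length_tmSubst] at hk hlen
      have hβ : β.length ≠ 1 := fun h => by
        obtain ⟨b, rfl⟩ := List.length_eq_one_iff.1 h
        exact hα (List.isChain_pair.2 (by omega))
      obtain ⟨n, i, hi, rfl⟩ := ih β.length (by omega) (by omega)
        (h3.trans (ncard_tmExtensions_tmSubst_le heven)) rfl
      exact ⟨n + 1, i, hi, tmSubst_blk hi _⟩

theorem four_le_ncard_tmExtensions_pair {i : ℕ} (hi : i ≤ 1) :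
    4 ≤ (tmExtensions [i, 1 - i]).ncard := by
  have hmem : ((Finset.range 2 ×ˢ Finset.range 2 : Finset (ℕ × ℕ)) : Set (ℕ × ℕ)) ⊆
      tmExtensions [i, 1 - i] := by
    rintro ⟨j, k⟩ hjk
    simp only [Finset.coe_product, Set.mem_prod, Finset.mem_coe, Finset.mem_range] at hjk
    obtain ⟨hj, hk⟩ := hjk
    simp only [mem_tmExtensions, occursAt_cons, occursAt_nil]
    interval_cases i <;> interval_cases j <;> interval_cases k
    -- Positions at which `j i (1 - i) k` occurs in `0110100110010110`.
    exacts [⟨9, by simp [tm]⟩, ⟨5, by simp [tm]⟩, ⟨2, by simp [tm]⟩, ⟨11, by simp [tm]⟩,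
      ⟨3, by simp [tm]⟩, ⟨10, by simp [tm]⟩, ⟨7, by simp [tm]⟩, ⟨1, by simp [tm]⟩]
  simpa using Set.ncard_le_ncard hmem (finite_tmExtensions _)

theorem ncard_tmExtensions_blk {i : ℕ} (hi : i ≤ 1) (n : ℕ) :
    (tmExtensions (blk i (n + 1))).ncard = 4 := by
  refine (ncard_tmExtensions_le_four _).antisymm ?_
  induction n with
  | zero => exact four_le_ncard_tmExtensions_pair hi
  | succ n ih =>
    rw [← tmSubst_blk hi]
    exact ih.trans (ncard_tmExtensions_le_tmSubst _)

theorem exists_eq_blk_append_iff (α : List ℕ) :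
    (∃ n, α = blk 0 n ++ blk 1 n ∨ α = blk 1 n ++ blk 0 n ∨
      α = blk 0 n ++ blk 1 n ++ blk 1 n ++ blk 0 n ∨
      α = blk 1 n ++ blk 0 n ++ blk 0 n ++ blk 1 n) ↔ ∃ n, ∃ i ≤ 1, α = blk i (n + 1) := by
  constructor
  · rintro ⟨n, rfl | rfl | rfl | rfl⟩
    · exact ⟨n, 0, zero_le_one, rfl⟩
    · exact ⟨n, 1, le_rfl, rfl⟩
    · exact ⟨n + 1, 0, zero_le_one, by simp [blk]⟩
    · exact ⟨n + 1, 1, le_rfl, by simp [blk]⟩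
  · rintro ⟨n, i, hi, rfl⟩
    rcases Nat.le_one_iff_eq_zero_or_eq_one.1 hi with rfl | rfl
    · exact ⟨n, Or.inl rfl⟩
    · exact ⟨n, Or.inr (Or.inl rfl)⟩

theorem extension_number_three_iff_general (α : List ℕ) (hlen : 2 ≤ α.length) :
    (3 ≤ (tmExtensions α).ncard ↔
      ∃ n : ℕ, α = blk 0 n ++ blk 1 n ∨ α = blk 1 n ++ blk 0 n ∨
        α = blk 0 n ++ blk 1 n ++ blk 1 n ++ blk 0 n ∨
        α = blk 1 n ++ blk 0 n ++ blk 0 n ++ blk 1 n) ∧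
    (3 ≤ (tmExtensions α).ncard → (tmExtensions α).ncard = 4) := by
  rw [exists_eq_blk_append_iff]
  have hblk : 3 ≤ (tmExtensions α).ncard → ∃ n, ∃ i ≤ 1, α = blk i (n + 1) :=
    exists_eq_blk_of_three_le_ncard hlen
  have hfour : (∃ n, ∃ i ≤ 1, α = blk i (n + 1)) → (tmExtensions α).ncard = 4 := by
    rintro ⟨n, i, hi, rfl⟩
    exact ncard_tmExtensions_blk hi n
  exact ⟨⟨hblk, fun h => (hfour h).symm ▸ by norm_num⟩, hfour ∘ hblk⟩

/-- A factor `α` of the two-sided Thue–Morse sequence with `|α| ≥ 2` has at least `3`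
two-sided one-letter extensions iff `α` is one of `0⁽ⁿ⁾1⁽ⁿ⁾`, `1⁽ⁿ⁾0⁽ⁿ⁾`,
`0⁽ⁿ⁾1⁽ⁿ⁾1⁽ⁿ⁾0⁽ⁿ⁾`, `1⁽ⁿ⁾0⁽ⁿ⁾0⁽ⁿ⁾1⁽ⁿ⁾` for some `n`; in that case it has exactly `4`. -/
theorem extension_number_three_iff (α : List ℕ) (hα : IsFactor α) (hlen : 2 ≤ α.length) :
    (3 ≤ {p : ℕ × ℕ | (p.1 = 0 ∨ p.1 = 1) ∧ (p.2 = 0 ∨ p.2 = 1) ∧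
        IsFactor (p.1 :: (α ++ [p.2]))}.ncard ↔
      ∃ n : ℕ, α = blk 0 n ++ blk 1 n ∨ α = blk 1 n ++ blk 0 n ∨
        α = blk 0 n ++ blk 1 n ++ blk 1 n ++ blk 0 n ∨
        α = blk 1 n ++ blk 0 n ++ blk 0 n ++ blk 1 n) ∧
    (3 ≤ {p : ℕ × ℕ | (p.1 = 0 ∨ p.1 = 1) ∧ (p.2 = 0 ∨ p.2 = 1) ∧
        IsFactor (p.1 :: (α ++ [p.2]))}.ncard →
      {p : ℕ × ℕ | (p.1 = 0 ∨ p.1 = 1) ∧ (p.2 = 0 ∨ p.2 = 1) ∧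
        IsFactor (p.1 :: (α ++ [p.2]))}.ncard = 4) :=
  extension_number_three_iff_general α hlen
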